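/- Each of the eight subspaces V_id, V_r, V_l, V_d, V_[S], V_{S}, V_[A], V_{A} of M_d ⊗ M_d is invariant under the two-copy representation: φ⊗²(U)W ⊆ W for every U ∈ 𝒩_q and each such subspace W. -/

import Mathlib

open Matrix MeasureTheory
open scoped Kronecker

noncomputable section

namespace CliffordPaper

/-- The single-qubit Pauli matrices `1, X, Y, Z`. -/
def pauli1 : Fin 4 → Matrix (Fin 2) (Fin 2) ℂ :=
  ![1, !![0, 1; 1, 0], !![0, -Complex.I; Complex.I, 0], !![1, 0; 0, -1]]

/-- Index type for the computational basis of `q` qubits. -/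
abbrev Idx (q : ℕ) := Fin q → Fin 2

/-- The space `M_d` of `d × d` complex matrices, `d = 2^q`. -/
abbrev Mat (q : ℕ) := Matrix (Idx q) (Idx q) ℂ

/-- The space `M_d ⊗ M_d`, realized as matrices indexed by the product index set
(the tensor factors combine via the Kronecker product `⊗ₖ`). -/
abbrev BMat (q : ℕ) := Matrix (Idx q × Idx q) (Idx q × Idx q) ℂ

/-- The `q`-fold Kronecker product of single-qubit Paulis with labels `a`. -/
def PauliOp {q : ℕ} (a : Fin q → Fin 4) : Mat q :=
  Matrix.of fun x y => ∏ i, pauli1 (a i) (x i) (y i)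

/-- `√d` as a complex number, where `d = 2^q`. -/
def sqrtd (q : ℕ) : ℂ := (Real.sqrt (2 ^ q) : ℝ)

/-- The set `σ̂_q` of normalized Pauli operators. -/
def sigmaHat (q : ℕ) : Set (Mat q) :=
  {M | ∃ a : Fin q → Fin 4, M = (sqrtd q)⁻¹ • PauliOp a}

/-- The normalized identity `σ₀ = 1/√d`. -/
def sigma0 (q : ℕ) : Mat q := (sqrtd q)⁻¹ • (1 : Mat q)

/-- `σ_q = σ̂_q \ {σ₀}`. -/
def sigmaSet (q : ℕ) : Set (Mat q) := sigmaHat q \ {sigma0 q}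

/-- `N_τ`: the normalized nonidentity Paulis anticommuting with `τ`. -/
def NSet {q : ℕ} (τ : Mat q) : Set (Mat q) :=
  {σ | σ ∈ sigmaSet q ∧ σ * τ + τ * σ = 0}

/-- `C_τ`: the normalized nonidentity Paulis distinct from `τ` commuting with `τ`. -/
def CSet {q : ℕ} (τ : Mat q) : Set (Mat q) :=
  {σ | σ ∈ sigmaSet q ∧ σ ≠ τ ∧ σ * τ = τ * σ}

/-- `Ĉ_τ`: the normalized Paulis commuting with `τ`. -/
def CHatSet {q : ℕ} (τ : Mat q) : Set (Mat q) :=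
  {σ | σ ∈ sigmaHat q ∧ σ * τ = τ * σ}

/-- The normalized product `σ·τ = √d στ`. -/
def nprod {q : ℕ} (σ τ : Mat q) : Mat q := sqrtd q • (σ * τ)

/-- The Clifford normalizer `𝒩_q`: unitaries mapping normalized Paulis to
signed normalized Paulis under conjugation. -/
def Cliff (q : ℕ) : Set (Mat q) :=
  {U | U ∈ Matrix.unitaryGroup (Idx q) ℂ ∧
    ∀ σ ∈ sigmaHat q, ∃ τ ∈ sigmaHat q, U * σ * Uᴴ = τ ∨ U * σ * Uᴴ = -τ}

/-- The two-copy representation `φ⊗²(U) : A ⊗ B ↦ (UAU†) ⊗ (UBU†)`, extended linearly. -/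
def twoCopy {q : ℕ} (U : Mat q) : BMat q →ₗ[ℂ] BMat q where
  toFun M := (U ⊗ₖ U) * M * (U ⊗ₖ U)ᴴ
  map_add' M N := by
    show (U ⊗ₖ U) * (M + N) * (U ⊗ₖ U)ᴴ = (U ⊗ₖ U) * M * (U ⊗ₖ U)ᴴ + (U ⊗ₖ U) * N * (U ⊗ₖ U)ᴴ
    rw [Matrix.mul_add, Matrix.add_mul]
  map_smul' c M := by
    show (U ⊗ₖ U) * (c • M) * (U ⊗ₖ U)ᴴ = c • ((U ⊗ₖ U) * M * (U ⊗ₖ U)ᴴ)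
    rw [Matrix.mul_smul, Matrix.smul_mul]

/-- The Hilbert–Schmidt inner product `⟨A, B⟩ = tr(A† B)`. -/
def hs {q : ℕ} (A B : BMat q) : ℂ := (Aᴴ * B).trace

/-- A subspace is invariant under the two-copy representation of `𝒩_q`. -/
def IsInvariant (q : ℕ) (W : Submodule ℂ (BMat q)) : Prop :=
  ∀ U ∈ Cliff q, ∀ v ∈ W, twoCopy U v ∈ W

/-- A nonzero invariant subspace carries an irreducible subrepresentation. -/
def CarriesIrred (q : ℕ) (W : Submodule ℂ (BMat q)) : Prop :=
  W ≠ ⊥ ∧ IsInvariant q W ∧ ∀ W' ≤ W, IsInvariant q W' → W' = ⊥ ∨ W' = W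

/-- Two invariant subspaces carry equivalent subrepresentations: there is a linear
isomorphism between them intertwining the two-copy representation. -/
def EquivRep (q : ℕ) (W W' : Submodule ℂ (BMat q)) : Prop :=
  ∃ T : BMat q →ₗ[ℂ] BMat q, Submodule.map T W = W' ∧
    (∀ x ∈ W, T x = 0 → x = 0) ∧
    ∀ U ∈ Cliff q, ∀ x ∈ W, T (twoCopy U x) = twoCopy U (T x)

/-- `S_{σ,τ} = (σ⊗τ + τ⊗σ)/√2`. -/
def SVec {q : ℕ} (σ τ : Mat q) : BMat q :=
  ((Real.sqrt 2 : ℂ))⁻¹ • (σ ⊗ₖ τ + τ ⊗ₖ σ)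

/-- `A_{σ,τ} = (σ⊗τ − τ⊗σ)/√2`. -/
def AVec {q : ℕ} (σ τ : Mat q) : BMat q :=
  ((Real.sqrt 2 : ℂ))⁻¹ • (σ ⊗ₖ τ - τ ⊗ₖ σ)

/-- The trivial sector `V_id`. -/
def Vid (q : ℕ) : Submodule ℂ (BMat q) :=
  Submodule.span ℂ {sigma0 q ⊗ₖ sigma0 q}

/-- The right adjoint sector `V_r`. -/
def Vr (q : ℕ) : Submodule ℂ (BMat q) :=
  Submodule.span ℂ {M | ∃ τ ∈ sigmaSet q, M = sigma0 q ⊗ₖ τ}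

/-- The left adjoint sector `V_l`. -/
def Vl (q : ℕ) : Submodule ℂ (BMat q) :=
  Submodule.span ℂ {M | ∃ τ ∈ sigmaSet q, M = τ ⊗ₖ sigma0 q}

/-- The diagonal sector `V_d`. -/
def Vdiag (q : ℕ) : Submodule ℂ (BMat q) :=
  Submodule.span ℂ {M | ∃ τ ∈ sigmaSet q, M = τ ⊗ₖ τ}

/-- The symmetric commuting sector `V_[S]`. -/
def VScom (q : ℕ) : Submodule ℂ (BMat q) :=
  Submodule.span ℂ {M | ∃ τ ∈ sigmaSet q, ∃ σ ∈ CSet τ, M = SVec σ τ}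

/-- The symmetric anti-commuting sector `V_{S}`. -/
def VSanti (q : ℕ) : Submodule ℂ (BMat q) :=
  Submodule.span ℂ {M | ∃ τ ∈ sigmaSet q, ∃ σ ∈ NSet τ, M = SVec σ τ}

/-- The antisymmetric commuting sector `V_[A]`. -/
def VAcom (q : ℕ) : Submodule ℂ (BMat q) :=
  Submodule.span ℂ {M | ∃ τ ∈ sigmaSet q, ∃ σ ∈ CSet τ, M = AVec σ τ}

/-- The antisymmetric anti-commuting sector `V_{A}`. -/
def VAanti (q : ℕ) : Submodule ℂ (BMat q) :=
  Submodule.span ℂ {M | ∃ τ ∈ sigmaSet q, ∃ σ ∈ NSet τ, M = AVec σ τ}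

/-- `V_[A]` presented with the spanning vectors `A_{σ,σ·τ}`, `σ ∈ C_τ`. -/
def VAcom' (q : ℕ) : Submodule ℂ (BMat q) :=
  Submodule.span ℂ {M | ∃ τ ∈ sigmaSet q, ∃ σ ∈ CSet τ, M = AVec σ (nprod σ τ)}

/-- `V_0 = span{Σ_{σ∈σ_q} σ⊗σ}`. -/
def V0diag (q : ℕ) : Submodule ℂ (BMat q) :=
  Submodule.span ℂ {∑ᶠ σ ∈ sigmaSet q, σ ⊗ₖ σ}

/-- `V_1`, the "positive" part of the diagonal sector. -/
def V1diag (q : ℕ) : Submodule ℂ (BMat q) :=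
  Submodule.span ℂ {v | ∃ lam : Mat q → ℂ,
    v = ∑ᶠ σ ∈ sigmaSet q, lam σ • (σ ⊗ₖ σ) ∧
    (∑ᶠ σ ∈ sigmaSet q, lam σ) = 0 ∧
    ∀ τ ∈ sigmaSet q, (∑ᶠ σ ∈ NSet τ, lam σ) = -((2 ^ q : ℂ) / 2) * lam τ}

/-- `V_2`, the "negative" part of the diagonal sector. -/
def V2diag (q : ℕ) : Submodule ℂ (BMat q) :=
  Submodule.span ℂ {v | ∃ lam : Mat q → ℂ,
    v = ∑ᶠ σ ∈ sigmaSet q, lam σ • (σ ⊗ₖ σ) ∧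
    (∑ᶠ σ ∈ sigmaSet q, lam σ) = 0 ∧
    ∀ τ ∈ sigmaSet q, (∑ᶠ σ ∈ NSet τ, lam σ) = ((2 ^ q : ℂ) / 2) * lam τ}

/-- `v^[adj]_τ = (2|C_τ|)^{-1/2} Σ_{σ∈C_τ} S_{σ,σ·τ}`. -/
def vadjS {q : ℕ} (τ : Mat q) : BMat q :=
  ((Real.sqrt (2 * ((CSet τ).ncard : ℝ)) : ℂ))⁻¹ • ∑ᶠ σ ∈ CSet τ, SVec σ (nprod σ τ)

/-- `v^{adj}_τ = (2|N_τ|)^{-1/2} Σ_{σ∈N_τ} A_{σ,iσ·τ}`. -/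
def vadjA {q : ℕ} (τ : Mat q) : BMat q :=
  ((Real.sqrt (2 * ((NSet τ).ncard : ℝ)) : ℂ))⁻¹ •
    ∑ᶠ σ ∈ NSet τ, AVec σ (Complex.I • nprod σ τ)

/-- The symmetric adjoint sector `V_[adj]`. -/
def VadjS (q : ℕ) : Submodule ℂ (BMat q) :=
  Submodule.span ℂ {M | ∃ τ ∈ sigmaSet q, M = vadjS τ}

/-- The antisymmetric adjoint sector `V_{adj}`. -/
def VadjA (q : ℕ) : Submodule ℂ (BMat q) :=
  Submodule.span ℂ {M | ∃ τ ∈ sigmaSet q, M = vadjA τ}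

/-- The orthogonal complement `V^⊥_{adj}` of `V_{adj}` inside `V_{A}`. -/
def VadjAperp (q : ℕ) : Submodule ℂ (BMat q) :=
  Submodule.span ℂ {v | v ∈ VAanti q ∧ ∀ w ∈ VadjA q, hs w v = 0}

/-- `V_{1}^τ`. -/
def V1symτ (q : ℕ) (τ : Mat q) : Submodule ℂ (BMat q) :=
  Submodule.span ℂ {v | ∃ lam : Mat q → ℂ,
    v = ∑ᶠ σ ∈ NSet τ, lam σ • SVec σ (Complex.I • nprod σ τ) ∧
    ∀ ν ∈ NSet τ, (∑ᶠ σ ∈ NSet τ ∩ CSet ν, lam σ) - (∑ᶠ σ ∈ NSet τ ∩ NSet ν, lam σ)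
      = ((2 ^ q : ℂ) / 2) * lam ν}

/-- `V_{2}^τ`. -/
def V2symτ (q : ℕ) (τ : Mat q) : Submodule ℂ (BMat q) :=
  Submodule.span ℂ {v | ∃ lam : Mat q → ℂ,
    v = ∑ᶠ σ ∈ NSet τ, lam σ • SVec σ (Complex.I • nprod σ τ) ∧
    ∀ ν ∈ NSet τ, (∑ᶠ σ ∈ NSet τ ∩ CSet ν, lam σ) - (∑ᶠ σ ∈ NSet τ ∩ NSet ν, lam σ)
      = -((2 ^ q : ℂ) / 2) * lam ν}

/-- `V_{1} = ⊕_τ V_{1}^τ`. -/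
def V1sym (q : ℕ) : Submodule ℂ (BMat q) := ⨆ τ ∈ sigmaSet q, V1symτ q τ

/-- `V_{2} = ⊕_τ V_{2}^τ`. -/
def V2sym (q : ℕ) : Submodule ℂ (BMat q) := ⨆ τ ∈ sigmaSet q, V2symτ q τ

/-- The defining property of the map `Θ` on `V_[A]`. -/
def ThetaProp (q : ℕ) (Θ : BMat q →ₗ[ℂ] BMat q) : Prop :=
  ∀ τ ∈ sigmaSet q, ∀ σ ∈ CSet τ,
    Θ (AVec σ (nprod σ τ)) =
      (∑ᶠ σ' ∈ NSet τ ∩ CSet σ, AVec σ' (Complex.I • nprod σ' τ)) -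
      ∑ᶠ σ' ∈ NSet τ ∩ NSet σ, AVec σ' (Complex.I • nprod σ' τ)

/-- `V` = span of off-diagonal products `σ⊗σ̂`, `σ ≠ σ̂`. -/
def Voff (q : ℕ) : Submodule ℂ (BMat q) :=
  Submodule.span ℂ {M | ∃ σ ∈ sigmaSet q, ∃ σ' ∈ sigmaSet q, σ ≠ σ' ∧ M = σ ⊗ₖ σ'}

/-- `V^τ` = span of the `σ⊗σ̂` with `σ·σ̂ ∈ {τ, −τ, iτ, −iτ}`. -/
def Vtau (q : ℕ) (τ : Mat q) : Submodule ℂ (BMat q) :=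
  Submodule.span ℂ {M | ∃ σ ∈ sigmaSet q, ∃ σ' ∈ sigmaSet q,
    (nprod σ σ' = τ ∨ nprod σ σ' = -τ ∨ nprod σ σ' = Complex.I • τ ∨
      nprod σ σ' = -(Complex.I • τ)) ∧ M = σ ⊗ₖ σ'}

/-!
Conjugation by a Clifford unitary permutes the normalized Paulis up to sign. By orthogonality of
the Paulis no two of them are negatives of each other, so the induced unsigned map is injective; it
fixes `σ₀`, hence preserves `σ_q`, and it respects commutation and anticommutation, which are
insensitive to signs. Each sector is spanned by the values of a bilinear, conjugation-equivariant
map on the pairs of Paulis in one such relation, so its generators are permuted up to sign as well.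
-/

section PiKronecker

variable {ι R : Type*} [Fintype ι] [CommSemiring R] {l m n : ι → Type*}

/-- The Kronecker product `⨂ᵢ Aᵢ` of a finite family of matrices, with rows and columns indexed by
tuples. -/
def piKronecker (A : ∀ i, Matrix (m i) (n i) R) : Matrix (∀ i, m i) (∀ i, n i) R :=
  of fun x y => ∏ i, A i (x i) (y i)

theorem piKronecker_one [∀ i, DecidableEq (n i)] [DecidableEq (∀ i, n i)] :
    piKronecker (fun i => (1 : Matrix (n i) (n i) R)) = 1 := by
  ext x y
  simp only [piKronecker, of_apply, one_apply, Fintype.prod_boole, funext_iff]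

theorem piKronecker_mul [DecidableEq ι] [∀ i, Fintype (m i)] (A : ∀ i, Matrix (l i) (m i) R)
    (B : ∀ i, Matrix (m i) (n i) R) :
    piKronecker A * piKronecker B = piKronecker fun i => A i * B i := by
  ext x y
  simp only [piKronecker, mul_apply, of_apply, ← Finset.prod_mul_distrib, Finset.prod_univ_sum,
    Fintype.piFinset_univ]

theorem trace_piKronecker [DecidableEq ι] [∀ i, Fintype (n i)] (A : ∀ i, Matrix (n i) (n i) R) :
    (piKronecker A).trace = ∏ i, (A i).trace := by
  simp only [piKronecker, trace, diag, of_apply, Finset.prod_univ_sum, Fintype.piFinset_univ]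

end PiKronecker

theorem anticommute_of_map_eq_smul {F R S G : Type*} [NonUnitalNonAssocSemiring R]
    [NonUnitalNonAssocSemiring S] [CommGroup G] [DistribMulAction G S] [IsScalarTower G S S]
    [SMulCommClass G S S] [FunLike F R S] [NonUnitalRingHomClass F R S] (φ : F) {a b : R}
    {a' b' : S} {s t : G} (hab : a * b + b * a = 0) (ha : φ a = s • a') (hb : φ b = t • b') :
    a' * b' + b' * a' = 0 := by
  have hφ : (s * t) • (a' * b' + b' * a') = 0 := by
    calc (s * t) • (a' * b' + b' * a') = φ (a * b + b * a) := by
          rw [map_add, map_mul, map_mul, ha, hb, smul_mul_smul_comm, smul_mul_smul_comm,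
            mul_comm t s, smul_add]
      _ = 0 := by rw [hab, map_zero]
  rwa [smul_eq_zero_iff_eq] at hφ

theorem trace_pauli1_mul (a b : Fin 4) :
    (pauli1 a * pauli1 b).trace = if a = b then 2 else 0 := by
  fin_cases a <;> fin_cases b <;> norm_num [pauli1, trace_fin_two]

section CliffordAction

variable {q : ℕ}

theorem PauliOp_eq_piKronecker (a : Fin q → Fin 4) :
    PauliOp a = piKronecker fun i => pauli1 (a i) :=
  rfl

theorem PauliOp_zero : PauliOp (0 : Fin q → Fin 4) = 1 :=
  piKronecker_one

theorem trace_PauliOp_mul (a b : Fin q → Fin 4) :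
    (PauliOp a * PauliOp b).trace = if a = b then 2 ^ q else 0 := by
  simp only [PauliOp_eq_piKronecker, piKronecker_mul, trace_piKronecker, trace_pauli1_mul,
    Fintype.prod_ite_zero, Finset.prod_const, Finset.card_univ, Fintype.card_fin, funext_iff]

theorem PauliOp_ne_neg (a b : Fin q → Fin 4) : PauliOp a ≠ -PauliOp b := by
  intro hab
  have htrace : (if a = b then 2 ^ q else 0 : ℂ) = -2 ^ q := by
    rw [← trace_PauliOp_mul, hab, neg_mul, trace_neg, trace_PauliOp_mul, if_pos rfl]
  split_ifs at htrace
  · exact self_ne_neg.2 (pow_ne_zero q two_ne_zero) htrace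
  · exact neg_ne_zero.2 (pow_ne_zero q two_ne_zero) htrace.symm

theorem sqrtd_ne_zero : sqrtd q ≠ 0 := by
  rw [sqrtd, Complex.ofReal_ne_zero]
  positivity

theorem sigma0_mem_sigmaHat : sigma0 q ∈ sigmaHat q :=
  ⟨0, by rw [PauliOp_zero, sigma0]⟩

theorem ne_neg_of_mem_sigmaHat {σ τ : Mat q} (hσ : σ ∈ sigmaHat q) (hτ : τ ∈ sigmaHat q) :
    σ ≠ -τ := by
  obtain ⟨a, rfl⟩ := hσ
  obtain ⟨b, rfl⟩ := hτ
  rw [← smul_neg]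
  exact (smul_right_injective _ (inv_ne_zero sqrtd_ne_zero)).ne (PauliOp_ne_neg a b)

theorem eq_of_mem_sigmaHat_of_eq_units_smul {σ τ : Mat q} (hσ : σ ∈ sigmaHat q)
    (hτ : τ ∈ sigmaHat q) {ε : ℤˣ} (h : σ = ε • τ) : σ = τ := by
  obtain rfl | rfl := Int.units_eq_one_or ε
  · rwa [one_smul] at h
  · rw [Units.neg_smul, one_smul] at h
    exact absurd h (ne_neg_of_mem_sigmaHat hσ hτ)

/-- The one-copy representation `φ(U) : A ↦ U A U†`, bundled as an algebra automorphism. -/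
abbrev oneCopy (U : unitaryGroup (Idx q) ℂ) : Mat q ≃⋆ₐ[ℂ] Mat q :=
  Unitary.conjStarAlgAut ℂ (Mat q) U

section OneCopy

variable {U : unitaryGroup (Idx q) ℂ}

theorem oneCopy_sigma0 : oneCopy U (sigma0 q) = sigma0 q := by
  rw [sigma0, map_smul, map_one]

theorem eq_of_oneCopy_eq_units_smul {σ τ ρ : Mat q} {ε δ : ℤˣ} (hσ : σ ∈ sigmaHat q)
    (hτ : τ ∈ sigmaHat q) (hσρ : oneCopy U σ = ε • ρ) (hτρ : oneCopy U τ = δ • ρ) : σ = τ := by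
  refine eq_of_mem_sigmaHat_of_eq_units_smul hσ hτ (ε := ε * δ⁻¹)
    (EquivLike.injective (oneCopy U) ?_)
  rw [hσρ, Units.smul_def (ε * δ⁻¹), map_zsmul, hτρ, ← Units.smul_def, mul_smul, inv_smul_smul]

theorem exists_oneCopy_eq_units_smul (hU : (U : Mat q) ∈ Cliff q) {σ : Mat q}
    (hσ : σ ∈ sigmaSet q) : ∃ σ' ∈ sigmaSet q, ∃ ε : ℤˣ, oneCopy U σ = ε • σ' := by
  obtain ⟨σ', hσ', ε, hε⟩ : ∃ σ' ∈ sigmaHat q, ∃ ε : ℤˣ, oneCopy U σ = ε • σ' := by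
    obtain ⟨σ', hσ', h | h⟩ := hU.2 σ hσ.1
    · exact ⟨σ', hσ', 1, by rw [one_smul]; exact h⟩
    · exact ⟨σ', hσ', -1, by rw [Units.neg_smul, one_smul]; exact h⟩
  refine ⟨σ', ⟨hσ', ?_⟩, ε, hε⟩
  rintro rfl
  exact hσ.2 (eq_of_oneCopy_eq_units_smul hσ.1 sigma0_mem_sigmaHat hε
    (oneCopy_sigma0.trans (one_smul ℤˣ _).symm))

end OneCopy

/-- A family `P` of sets of operators, read as the relation `σ ∈ P τ` with `τ ∈ σ_q`, is sign-stable
if conjugation by a Clifford unitary carries related pairs to related pairs up to a sign on each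
component. -/
def IsSignStable (P : Mat q → Set (Mat q)) : Prop :=
  ∀ U : unitaryGroup (Idx q) ℂ, (U : Mat q) ∈ Cliff q → ∀ τ ∈ sigmaSet q, ∀ σ ∈ P τ,
    ∃ τ' ∈ sigmaSet q, ∃ σ' ∈ P τ', ∃ ε δ : ℤˣ, oneCopy U σ = ε • σ' ∧ oneCopy U τ = δ • τ'

theorem isSignStable_sigma0 : IsSignStable fun _ => {sigma0 q} := by
  rintro U hU τ hτ _ rfl
  obtain ⟨τ', hτ', δ, hδ⟩ := exists_oneCopy_eq_units_smul hU hτ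
  exact ⟨τ', hτ', sigma0 q, rfl, 1, δ, oneCopy_sigma0.trans (one_smul ℤˣ _).symm, hδ⟩

theorem isSignStable_self : IsSignStable fun τ : Mat q => {τ} := by
  rintro U hU τ hτ _ rfl
  obtain ⟨τ', hτ', δ, hδ⟩ := exists_oneCopy_eq_units_smul hU hτ
  exact ⟨τ', hτ', τ', rfl, δ, δ, hδ, hδ⟩

theorem isSignStable_NSet : IsSignStable (NSet (q := q)) := by
  intro U hU τ hτ σ hσ
  obtain ⟨τ', hτ', δ, hδ⟩ := exists_oneCopy_eq_units_smul hU hτ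
  obtain ⟨σ', hσ', ε, hε⟩ := exists_oneCopy_eq_units_smul hU hσ.1
  have hanti : σ' * τ' + τ' * σ' = 0 :=
    anticommute_of_map_eq_smul (oneCopy U) hσ.2 hε hδ
  exact ⟨τ', hτ', σ', ⟨hσ', hanti⟩, ε, δ, hε, hδ⟩

theorem isSignStable_CSet : IsSignStable (CSet (q := q)) := by
  intro U hU τ hτ σ hσ
  obtain ⟨hσmem, hne, hcomm⟩ := hσ
  obtain ⟨τ', hτ', δ, hδ⟩ := exists_oneCopy_eq_units_smul hU hτ
  obtain ⟨σ', hσ', ε, hε⟩ := exists_oneCopy_eq_units_smul hU hσmem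
  have hne' : σ' ≠ τ' := by
    rintro rfl
    exact hne (eq_of_oneCopy_eq_units_smul hσmem.1 hτ.1 hε hδ)
  have hcomm' : Commute σ' τ' := by
    simpa only [hε, hδ, Commute.smul_left_iff, Commute.smul_right_iff] using
      Commute.map hcomm (oneCopy U)
  exact ⟨τ', hτ', σ', ⟨hσ', hne', hcomm'⟩, ε, δ, hε, hδ⟩

theorem isInvariant_span_of_forall_mem {G : Set (BMat q)}
    (hG : ∀ U : unitaryGroup (Idx q) ℂ, (U : Mat q) ∈ Cliff q → ∀ g ∈ G,
      twoCopy (U : Mat q) g ∈ Submodule.span ℂ G) :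
    IsInvariant q (Submodule.span ℂ G) := by
  intro U hU v hv
  have hle : Submodule.span ℂ G ≤ (Submodule.span ℂ G).comap (twoCopy U) :=
    Submodule.span_le.2 (hG ⟨U, hU.1⟩ hU)
  exact hle hv

/-- A bilinear map `M_d × M_d → M_d ⊗ M_d` is equivariant if it intertwines conjugation on both
arguments with the two-copy representation. -/
def IsEquivariant (f : Mat q →ₗ[ℂ] Mat q →ₗ[ℂ] BMat q) : Prop :=
  ∀ (U : unitaryGroup (Idx q) ℂ) (A B : Mat q),
    twoCopy (U : Mat q) (f A B) = f (oneCopy U A) (oneCopy U B)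

namespace IsEquivariant

variable {f g : Mat q →ₗ[ℂ] Mat q →ₗ[ℂ] BMat q}

theorem flip (hf : IsEquivariant f) : IsEquivariant f.flip :=
  fun U A B => hf U B A

theorem add (hf : IsEquivariant f) (hg : IsEquivariant g) : IsEquivariant (f + g) := by
  intro U A B
  simp only [LinearMap.add_apply, map_add, hf U, hg U]

theorem sub (hf : IsEquivariant f) (hg : IsEquivariant g) : IsEquivariant (f - g) := by
  intro U A B
  simp only [LinearMap.sub_apply, map_sub, hf U, hg U]

theorem const_smul (hf : IsEquivariant f) (c : ℂ) : IsEquivariant (c • f) := by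
  intro U A B
  simp only [LinearMap.smul_apply, map_smul, hf U]

end IsEquivariant

theorem IsSignStable.isInvariant_span {P : Mat q → Set (Mat q)} (hP : IsSignStable P)
    {f : Mat q →ₗ[ℂ] Mat q →ₗ[ℂ] BMat q} (hf : IsEquivariant f) :
    IsInvariant q (Submodule.span ℂ {M | ∃ τ ∈ sigmaSet q, ∃ σ ∈ P τ, M = f σ τ}) := by
  refine isInvariant_span_of_forall_mem ?_
  rintro U hU _ ⟨τ, hτ, σ, hσ, rfl⟩
  obtain ⟨τ', hτ', σ', hσ', ε, δ, hε, hδ⟩ := hP U hU τ hτ σ hσ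
  have himage : twoCopy (U : Mat q) (f σ τ) = ε • δ • f σ' τ' := by
    rw [hf, hε, hδ, ← f.flip_apply, LinearMap.map_smul_of_tower, f.flip_apply,
      LinearMap.map_smul_of_tower]
  rw [himage]
  exact Submodule.smul_of_tower_mem _ ε <| Submodule.smul_of_tower_mem _ δ <|
    Submodule.subset_span ⟨τ', hτ', σ', hσ', rfl⟩

theorem twoCopy_kronecker (U A B : Mat q) :
    twoCopy U (A ⊗ₖ B) = (U * A * Uᴴ) ⊗ₖ (U * B * Uᴴ) := by
  change (U ⊗ₖ U) * (A ⊗ₖ B) * (U ⊗ₖ U)ᴴ = _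
  rw [conjTranspose_kronecker, ← mul_kronecker_mul, ← mul_kronecker_mul]

/-- The tensor product `(A, B) ↦ A ⊗ B` as a bilinear map `M_d × M_d → M_d ⊗ M_d`. -/
def tensor (q : ℕ) : Mat q →ₗ[ℂ] Mat q →ₗ[ℂ] BMat q :=
  kroneckerBilinear

/-- The bilinear map `(σ, τ) ↦ S_{σ,τ}`. -/
def symTensor (q : ℕ) : Mat q →ₗ[ℂ] Mat q →ₗ[ℂ] BMat q :=
  ((Real.sqrt 2 : ℂ))⁻¹ • (tensor q + (tensor q).flip)

/-- The bilinear map `(σ, τ) ↦ A_{σ,τ}`. -/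
def altTensor (q : ℕ) : Mat q →ₗ[ℂ] Mat q →ₗ[ℂ] BMat q :=
  ((Real.sqrt 2 : ℂ))⁻¹ • (tensor q - (tensor q).flip)

theorem tensor_apply (A B : Mat q) : tensor q A B = A ⊗ₖ B :=
  rfl

theorem symTensor_apply (A B : Mat q) : symTensor q A B = SVec A B :=
  rfl

theorem altTensor_apply (A B : Mat q) : altTensor q A B = AVec A B :=
  rfl

theorem isEquivariant_tensor : IsEquivariant (tensor q) :=
  fun U A B => twoCopy_kronecker (U : Mat q) A B

theorem isEquivariant_symTensor : IsEquivariant (symTensor q) :=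
  (isEquivariant_tensor.add isEquivariant_tensor.flip).const_smul _

theorem isEquivariant_altTensor : IsEquivariant (altTensor q) :=
  (isEquivariant_tensor.sub isEquivariant_tensor.flip).const_smul _

theorem isInvariant_Vid : IsInvariant q (Vid q) := by
  refine isInvariant_span_of_forall_mem ?_
  rintro U - _ rfl
  rw [← tensor_apply, isEquivariant_tensor, oneCopy_sigma0]
  exact Submodule.mem_span_singleton_self _

theorem isInvariant_Vr : IsInvariant q (Vr q) := by
  simpa only [Vr, tensor_apply, Set.mem_singleton_iff, exists_eq_left] using
    isSignStable_sigma0.isInvariant_span (isEquivariant_tensor (q := q))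

theorem isInvariant_Vl : IsInvariant q (Vl q) := by
  simpa only [Vl, LinearMap.flip_apply, tensor_apply, Set.mem_singleton_iff, exists_eq_left] using
    isSignStable_sigma0.isInvariant_span (isEquivariant_tensor (q := q)).flip

theorem isInvariant_Vdiag : IsInvariant q (Vdiag q) := by
  simpa only [Vdiag, tensor_apply, Set.mem_singleton_iff, exists_eq_left] using
    isSignStable_self.isInvariant_span (isEquivariant_tensor (q := q))

theorem isInvariant_VScom : IsInvariant q (VScom q) := by
  simpa only [VScom, symTensor_apply] using
    isSignStable_CSet.isInvariant_span (isEquivariant_symTensor (q := q))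

theorem isInvariant_VSanti : IsInvariant q (VSanti q) := by
  simpa only [VSanti, symTensor_apply] using
    isSignStable_NSet.isInvariant_span (isEquivariant_symTensor (q := q))

theorem isInvariant_VAcom : IsInvariant q (VAcom q) := by
  simpa only [VAcom, altTensor_apply] using
    isSignStable_CSet.isInvariant_span (isEquivariant_altTensor (q := q))

theorem isInvariant_VAanti : IsInvariant q (VAanti q) := by
  simpa only [VAanti, altTensor_apply] using
    isSignStable_NSet.isInvariant_span (isEquivariant_altTensor (q := q))

end CliffordAction

/-- Lemma 3: the eight sectors are invariant under the
two-copy representation. -/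
theorem statement2 (q : ℕ) (hq : 1 ≤ q) :
    IsInvariant q (Vid q) ∧ IsInvariant q (Vr q) ∧ IsInvariant q (Vl q) ∧
    IsInvariant q (Vdiag q) ∧ IsInvariant q (VScom q) ∧ IsInvariant q (VSanti q) ∧
    IsInvariant q (VAcom q) ∧ IsInvariant q (VAanti q) :=
  ⟨isInvariant_Vid, isInvariant_Vr, isInvariant_Vl, isInvariant_Vdiag, isInvariant_VScom,
    isInvariant_VSanti, isInvariant_VAcom, isInvariant_VAanti⟩

end CliffordPaper
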